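/- Let A be a semi-amenable Banach algebra and I a closed two-sided ideal of A. Then the quotient Banach algebra A/I is semi-amenable. -/

import Mathlib

open Filter Topology

structure BanachBimodule (A : Type) [NonUnitalNormedRing A] [NormedSpace ℂ A]
    (X : Type) [NormedAddCommGroup X] [NormedSpace ℂ X] where
  lsmul : A →L[ℂ] X →L[ℂ] X
  rsmul : A →L[ℂ] X →L[ℂ] X
  lsmul_mul : ∀ a b x, lsmul (a * b) x = lsmul a (lsmul b x)
  rsmul_mul : ∀ a b x, rsmul (a * b) x = rsmul b (rsmul a x)
  lsmul_rsmul : ∀ a b x, rsmul b (lsmul a x) = lsmul a (rsmul b x)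

namespace BanachBimodule

variable {A : Type} [NonUnitalNormedRing A] [NormedSpace ℂ A]
variable {X : Type} [NormedAddCommGroup X] [NormedSpace ℂ X]

/-- The dual Banach bimodule on `X →L[ℂ] ℂ`, with `(a • f) x = f (x • a)` and
`(f • a) x = f (a • x)`. -/
noncomputable def dual (M : BanachBimodule A X) :
    BanachBimodule A (X →L[ℂ] ℂ) where
  lsmul := ((ContinuousLinearMap.compL ℂ X X ℂ).flip).comp M.rsmul
  rsmul := ((ContinuousLinearMap.compL ℂ X X ℂ).flip).comp M.lsmul
  lsmul_mul := by
    intro a b f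
    ext x
    exact congrArg f (M.rsmul_mul a b x)
  rsmul_mul := by
    intro a b f
    ext x
    exact congrArg f (M.lsmul_mul a b x)
  lsmul_rsmul := by
    intro a b f
    ext x
    exact congrArg f (M.lsmul_rsmul b a x)

def IsDerivation (M : BanachBimodule A X) (D : A →L[ℂ] X) : Prop :=
  ∀ a b : A, D (a * b) = M.lsmul a (D b) + M.rsmul b (D a)

def IsInner (M : BanachBimodule A X) (D : A →L[ℂ] X) : Prop :=
  ∃ x : X, ∀ a : A, D a = M.lsmul a x - M.rsmul a x

def IsSemiInner (M : BanachBimodule A X) (D : A →L[ℂ] X) : Prop :=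
  ∃ η ξ : X, ∀ a : A, D a = M.lsmul a η - M.rsmul a ξ

def IsApproxSemiInner (M : BanachBimodule A X) (D : A →L[ℂ] X) : Prop :=
  ∃ (ι : Type) (l : Filter ι) (η ξ : ι → X), l.NeBot ∧
    ∀ a : A, Tendsto (fun i => M.lsmul a (η i) - M.rsmul a (ξ i)) l (𝓝 (D a))

end BanachBimodule

/-- A Banach algebra `A` is amenable if every continuous derivation from `A` into the dual of
any Banach `A`-bimodule is inner. -/
def Amenable (A : Type) [NonUnitalNormedRing A] [NormedSpace ℂ A] : Prop :=
  ∀ (X : Type) [NormedAddCommGroup X] [NormedSpace ℂ X] [CompleteSpace X],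
    ∀ (M : BanachBimodule A X) (D : A →L[ℂ] (X →L[ℂ] ℂ)),
      M.dual.IsDerivation D → M.dual.IsInner D

/-- A Banach algebra `A` is semi-amenable if every continuous derivation from `A` into the dual of
any Banach `A`-bimodule is semi-inner. -/
def SemiAmenable (A : Type) [NonUnitalNormedRing A] [NormedSpace ℂ A] : Prop :=
  ∀ (X : Type) [NormedAddCommGroup X] [NormedSpace ℂ X] [CompleteSpace X],
    ∀ (M : BanachBimodule A X) (D : A →L[ℂ] (X →L[ℂ] ℂ)),
      M.dual.IsDerivation D → M.dual.IsSemiInner D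

/-- A Banach algebra `A` is approximately semi-amenable if every continuous derivation from `A`
into the dual of any Banach `A`-bimodule is approximately semi-inner. -/
def ApproxSemiAmenable (A : Type) [NonUnitalNormedRing A] [NormedSpace ℂ A] : Prop :=
  ∀ (X : Type) [NormedAddCommGroup X] [NormedSpace ℂ X] [CompleteSpace X],
    ∀ (M : BanachBimodule A X) (D : A →L[ℂ] (X →L[ℂ] ℂ)),
      M.dual.IsDerivation D → M.dual.IsApproxSemiInner D

/-- A Banach algebra `A` is semi-contractible if every continuous derivation from `A` into
any Banach `A`-bimodule is semi-inner. -/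
def SemiContractible (A : Type) [NonUnitalNormedRing A] [NormedSpace ℂ A] : Prop :=
  ∀ (X : Type) [NormedAddCommGroup X] [NormedSpace ℂ X] [CompleteSpace X],
    ∀ (M : BanachBimodule A X) (D : A →L[ℂ] X),
      M.IsDerivation D → M.IsSemiInner D

/-- A Banach algebra `A` is approximately semi-contractible if every continuous derivation from `A`
into any Banach `A`-bimodule is approximately semi-inner. -/
def ApproxSemiContractible (A : Type) [NonUnitalNormedRing A] [NormedSpace ℂ A] : Prop :=
  ∀ (X : Type) [NormedAddCommGroup X] [NormedSpace ℂ X] [CompleteSpace X],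
    ∀ (M : BanachBimodule A X) (D : A →L[ℂ] X),
      M.IsDerivation D → M.IsApproxSemiInner D

/-!
A derivation `D : Q → X*` pulls back along `π : A → Q` to a derivation of `A` into the dual of `X`,
regarded as an `A`-bimodule through `π`. Semi-amenability of `A` represents `D ∘ π` by some
`η, ξ ∈ X*`, and the same functionals represent `D` on the range of `π`, hence, both sides being
continuous, on its closure.
-/

namespace BanachBimodule

variable {A B X : Type} [NonUnitalNormedRing A] [NormedSpace ℂ A]
  [NonUnitalNormedRing B] [NormedSpace ℂ B] [NormedAddCommGroup X] [NormedSpace ℂ X]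

/-- The Banach `A`-bimodule obtained from a Banach `B`-bimodule by letting `A` act through a
multiplicative continuous linear map `φ : A → B`. -/
noncomputable def pullback (M : BanachBimodule B X) (φ : A →L[ℂ] B)
    (hφ : ∀ a b, φ (a * b) = φ a * φ b) : BanachBimodule A X where
  lsmul := M.lsmul.comp φ
  rsmul := M.rsmul.comp φ
  lsmul_mul a b x := by simp only [ContinuousLinearMap.comp_apply, hφ, M.lsmul_mul]
  rsmul_mul a b x := by simp only [ContinuousLinearMap.comp_apply, hφ, M.rsmul_mul]
  lsmul_rsmul a b x := M.lsmul_rsmul (φ a) (φ b) x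

variable {M : BanachBimodule B X} {φ : A →L[ℂ] B} {hφ : ∀ a b, φ (a * b) = φ a * φ b}
  {D : B →L[ℂ] X}

theorem dual_pullback : (M.pullback φ hφ).dual = M.dual.pullback φ hφ := rfl

theorem IsDerivation.pullback (hD : M.IsDerivation D) (hφ : ∀ a b, φ (a * b) = φ a * φ b) :
    (M.pullback φ hφ).IsDerivation (D.comp φ) := fun a b ↦
  (congrArg D (hφ a b)).trans (hD (φ a) (φ b))

theorem IsSemiInner.of_pullback (hdense : DenseRange φ)
    (h : (M.pullback φ hφ).IsSemiInner (D.comp φ)) : M.IsSemiInner D := by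
  obtain ⟨η, ξ, hηξ⟩ := h
  have heq : ⇑D = fun b ↦ M.lsmul b η - M.rsmul b ξ :=
    hdense.equalizer (by fun_prop) (by fun_prop) (funext hηξ)
  exact ⟨η, ξ, congrFun heq⟩

end BanachBimodule

theorem sInf_image_norm_sub_eq_infDist {E : Type*} [SeminormedAddCommGroup E] (s : Set E) (a : E) :
    sInf ((fun b ↦ ‖a - b‖) '' s) = Metric.infDist a s := by
  simp only [Metric.infDist_eq_iInf, sInf_image', dist_eq_norm]

theorem continuous_of_norm_map_le_infDist {E F 𝓕 : Type*} [SeminormedAddCommGroup E]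
    [SeminormedAddCommGroup F] [FunLike 𝓕 E F] [AddMonoidHomClass 𝓕 E F] (f : 𝓕) {s : Set E}
    (hs : 0 ∈ s) (hf : ∀ a, ‖f a‖ ≤ Metric.infDist a s) : Continuous f :=
  AddMonoidHomClass.continuous_of_bound f 1 fun a ↦ calc
    ‖f a‖ ≤ Metric.infDist a s := hf a
    _ ≤ dist a 0 := Metric.infDist_le_dist_of_mem hs
    _ = 1 * ‖a‖ := by rw [dist_zero_right, one_mul]

theorem semiAmenable_quotient_general {A B : Type} [NonUnitalNormedRing A] [NormedSpace ℂ A]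
    [NonUnitalNormedRing B] [NormedSpace ℂ B] (φ : A →ₙₐ[ℂ] B) (hφ : Continuous φ)
    (hdense : DenseRange φ) (hA : SemiAmenable A) : SemiAmenable B := by
  intro X _ _ _ M D hD
  let ψ : A →L[ℂ] B := ⟨φ, hφ⟩
  have hψ : ∀ a b, ψ (a * b) = ψ a * ψ b := map_mul φ
  have hderiv : (M.pullback ψ hψ).dual.IsDerivation (D.comp ψ) := by
    rw [BanachBimodule.dual_pullback]
    exact hD.pullback hψ
  have hsemi : (M.pullback ψ hψ).dual.IsSemiInner (D.comp ψ) :=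
    hA X (M.pullback ψ hψ) (D.comp ψ) hderiv
  rw [BanachBimodule.dual_pullback] at hsemi
  exact hsemi.of_pullback hdense

/-- If `A` is a semi-amenable Banach algebra and `I` is a closed two-sided ideal of `A`, then the
quotient Banach algebra `A/I` is semi-amenable.  The quotient is formalized abstractly: any
Banach algebra `Q` together with a surjective algebra homomorphism `π : A → Q` whose kernel is
`I` and whose norm is the quotient norm `‖π a‖ = inf { ‖a - b‖ : b ∈ I }` realizes `A/I`. -/
theorem semiAmenable_quotient
    (A : Type) [NonUnitalNormedRing A] [NormedSpace ℂ A]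
    [IsScalarTower ℂ A A] [SMulCommClass ℂ A A] [CompleteSpace A]
    (I : NonUnitalSubalgebra ℂ A)
    (hleft : ∀ a x : A, x ∈ I → a * x ∈ I) (hright : ∀ a x : A, x ∈ I → x * a ∈ I)
    (hclosed : IsClosed (I : Set A))
    (Q : Type) [NonUnitalNormedRing Q] [NormedSpace ℂ Q]
    [IsScalarTower ℂ Q Q] [SMulCommClass ℂ Q Q] [CompleteSpace Q]
    (π : A →ₙₐ[ℂ] Q) (hsurj : Function.Surjective π)
    (hker : ∀ a : A, π a = 0 ↔ a ∈ I)
    (hnorm : ∀ a : A, ‖π a‖ = sInf ((fun b => ‖a - b‖) '' (I : Set A)))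
    (hA : SemiAmenable A) : SemiAmenable Q := by
  have hcont : Continuous π := continuous_of_norm_map_le_infDist π I.zero_mem fun a ↦
    ((hnorm a).trans (sInf_image_norm_sub_eq_infDist _ a)).le
  exact semiAmenable_quotient_general π hcont hsurj.denseRange hA
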